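/- For every k ≥ 1 and every n ≥ 1, the image of Y(Q(n)) in U(Q(n))^{⊗k} under U^{⊗k}∘Δ_k^{op} coincides with its image under ev^{⊗k}∘Δ_k. -/

import Mathlib

noncomputable section
open scoped Classical

/-! # The universal enveloping superalgebra `U(Q(n))` of the queer Lie superalgebra

`U(Q(n))` is presented by even generators `e i j` and odd generators `f i j`
(`1 ≤ i,j ≤ n`) subject to the relations
`[e i j, e k l] = δ_{jk} e i l - δ_{li} e k j`,
`[e i j, f k l] = δ_{jk} f i l - δ_{li} f k j`,
`f i j * f k l + f k l * f i j = δ_{jk} e i l + δ_{li} e k j`. -/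

/-- Generators of `U(Q(n))`: `E i j` (even) and `F i j` (odd). -/
inductive QGen (n : ℕ) : Type
  | E : Fin n → Fin n → QGen n
  | F : Fin n → Fin n → QGen n

/-- Kronecker delta. -/
def kd {n : ℕ} (i j : Fin n) : ℂ := if i = j then 1 else 0

/-- The defining relations of `U(Q(n))`. -/
inductive QRel (n : ℕ) : FreeAlgebra ℂ (QGen n) → FreeAlgebra ℂ (QGen n) → Prop
  | ee (i j k l : Fin n) : QRel n
      (FreeAlgebra.ι ℂ (QGen.E i j) * FreeAlgebra.ι ℂ (QGen.E k l) -
        FreeAlgebra.ι ℂ (QGen.E k l) * FreeAlgebra.ι ℂ (QGen.E i j))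
      (kd j k • FreeAlgebra.ι ℂ (QGen.E i l) - kd l i • FreeAlgebra.ι ℂ (QGen.E k j))
  | ef (i j k l : Fin n) : QRel n
      (FreeAlgebra.ι ℂ (QGen.E i j) * FreeAlgebra.ι ℂ (QGen.F k l) -
        FreeAlgebra.ι ℂ (QGen.F k l) * FreeAlgebra.ι ℂ (QGen.E i j))
      (kd j k • FreeAlgebra.ι ℂ (QGen.F i l) - kd l i • FreeAlgebra.ι ℂ (QGen.F k j))
  | ff (i j k l : Fin n) : QRel n
      (FreeAlgebra.ι ℂ (QGen.F i j) * FreeAlgebra.ι ℂ (QGen.F k l) +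
        FreeAlgebra.ι ℂ (QGen.F k l) * FreeAlgebra.ι ℂ (QGen.F i j))
      (kd j k • FreeAlgebra.ι ℂ (QGen.E i l) + kd l i • FreeAlgebra.ι ℂ (QGen.E k j))

/-- The universal enveloping superalgebra `U(Q(n))`. -/
abbrev UQ (n : ℕ) := RingQuot (QRel n)

/-- The generator `e i j` of `U(Q(n))`. -/
def Ue {n : ℕ} (i j : Fin n) : UQ n :=
  RingQuot.mkAlgHom ℂ (QRel n) (FreeAlgebra.ι ℂ (QGen.E i j))

/-- The generator `f i j` of `U(Q(n))`. -/
def Uf {n : ℕ} (i j : Fin n) : UQ n :=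
  RingQuot.mkAlgHom ℂ (QRel n) (FreeAlgebra.ι ℂ (QGen.F i j))

/-- Sergeev's elements `e_{ij}^{(m)}` and `f_{ij}^{(m)}` of `U(Q(n))`, defined recursively by
`e^{(0)} = δ`, `f^{(0)} = 0`,
`e_{ij}^{(m)} = Σ_k e_{ik} e_{kj}^{(m-1)} + (-1)^{m+1} Σ_k f_{ik} f_{kj}^{(m-1)}`,
`f_{ij}^{(m)} = Σ_k e_{ik} f_{kj}^{(m-1)} + (-1)^{m+1} Σ_k f_{ik} e_{kj}^{(m-1)}`. -/
def efU (n : ℕ) : ℕ → (Fin n → Fin n → UQ n) × (Fin n → Fin n → UQ n)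
  | 0 => (fun i j => algebraMap ℂ (UQ n) (kd i j), fun _ _ => 0)
  | m + 1 =>
      (fun i j => (∑ k, Ue i k * (efU n m).1 k j) +
        (-1 : ℂ) ^ m • ∑ k, Uf i k * (efU n m).2 k j,
       fun i j => (∑ k, Ue i k * (efU n m).2 k j) +
        (-1 : ℂ) ^ m • ∑ k, Uf i k * (efU n m).1 k j)

/-- `e_{ij}^{(m)}`. -/
def eU {n : ℕ} (m : ℕ) (i j : Fin n) : UQ n := (efU n m).1 i j
/-- `f_{ij}^{(m)}`. -/
def fU {n : ℕ} (m : ℕ) (i j : Fin n) : UQ n := (efU n m).2 i j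

/-- For `l ∣ n`, the index `l(p-1)+i` of `{1,…,n}` (0-based: block `p`, position `i`). -/
def bidx {n l : ℕ} (h : l ∣ n) (p : Fin (n / l)) (i : Fin l) : Fin n :=
  ⟨l * p.val + i.val, by
    have h1 : i.val < l := i.isLt
    have h2 : p.val + 1 ≤ n / l := p.isLt
    have h3 : l * (p.val + 1) ≤ l * (n / l) := Nat.mul_le_mul_left l h2
    have h4 : n / l * l ≤ n := Nat.div_mul_le_self n l
    have h5 : l * (p.val + 1) = l * p.val + l := Nat.mul_succ l p.val
    have h6 : l * (n / l) = n / l * l := Nat.mul_comm l (n / l)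
    omega⟩
set_option linter.unusedVariables false

/-! # The character `χ`, the left ideal `I_χ` and the finite W-algebra data

Here `l ∣ n` and `χ` corresponds to the even nilpotent element of `Q(n)` all of whose
Jordan blocks have size `l`.  The subalgebra `m = ⊕_{j<0} g_j` is spanned by the
elements `e_{l(p-1)+i+k, l(q-1)+i}` and `f_{l(p-1)+i+k, l(q-1)+i}` (`k ≥ 1`), and
`χ(e_{l(p-1)+i+1, l(q-1)+i}) = δ_{pq}` and `χ = 0` on the other basis elements. -/

/-- The set of elements `a - χ(a)` for `a` ranging over the standard basis of `m`;
(rows/columns written 0-based: `a` is the position of the row inside its block `p`,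
`b` the position of the column inside its block `q`, with `b < a`). -/
def mSet (n l : ℕ) (h : l ∣ n) : Set (UQ n) :=
  { x : UQ n | ∃ (p q : Fin (n / l)) (a b : Fin l), b.val < a.val ∧
      (x = Ue (bidx h p a) (bidx h q b) -
            algebraMap ℂ (UQ n) (if a.val = b.val + 1 ∧ p = q then 1 else 0) ∨
       x = Uf (bidx h p a) (bidx h q b)) }

/-- The left ideal `I_χ` of `U(Q(n))` generated by the `a - χ(a)`, `a ∈ m`. -/
def Ichi (n l : ℕ) (h : l ∣ n) : Submodule (UQ n) (UQ n) :=
  Submodule.span (UQ n) (mSet n l h)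

/-- The quotient `U(Q(n))/I_χ` (as a `ℂ`-vector space). -/
abbrev Wq (n l : ℕ) (h : l ∣ n) := UQ n ⧸ (Ichi n l h).restrictScalars ℂ

/-- The quotient map `π : U(Q(n)) → U(Q(n))/I_χ`. -/
def piq (n l : ℕ) (h : l ∣ n) : UQ n →ₗ[ℂ] Wq n l h :=
  ((Ichi n l h).restrictScalars ℂ).mkQ

/-- `y` super-commutes with `m` into `I_χ`:  `[a, y] ∈ I_χ` for every `a` in the standard
basis of `m`.  Here the super-commutator of the odd element `f` with (the possibly
non-homogeneous) `y` is `f * y - σ(y) * f`, where `σ` is the parity involution of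
`U(Q(n))` (the algebra automorphism fixing the `e`'s and negating the `f`'s). -/
def Wcond {n l : ℕ} (h : l ∣ n) (σ : UQ n →ₐ[ℂ] UQ n) (y : UQ n) : Prop :=
  ∀ (p q : Fin (n / l)) (a b : Fin l), b.val < a.val →
    (Ue (bidx h p a) (bidx h q b) * y - y * Ue (bidx h p a) (bidx h q b) ∈ Ichi n l h) ∧
    (Uf (bidx h p a) (bidx h q b) * y - σ y * Uf (bidx h p a) (bidx h q b) ∈ Ichi n l h)

/-- The finite W-algebra `W_χ = {π(y) | [a, y] ∈ I_χ for all a ∈ m}`, as a subset of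
`U(Q(n))/I_χ`.  (Its product is `π(y₁)·π(y₂) = π(y₁y₂)`.) -/
def WchiSet (n l : ℕ) (h : l ∣ n) (σ : UQ n →ₐ[ℂ] UQ n) : Set (Wq n l h) :=
  { w : Wq n l h | ∃ y : UQ n, Wcond h σ y ∧ piq n l h y = w }

/-- The standard basis elements of the parabolic subalgebra `p = ⊕_{j≥0} g_j`. -/
def pSet (n l : ℕ) (h : l ∣ n) : Set (UQ n) :=
  { x : UQ n | ∃ (p q : Fin (n / l)) (a b : Fin l), a.val ≤ b.val ∧
      (x = Ue (bidx h p a) (bidx h q b) ∨ x = Uf (bidx h p a) (bidx h q b)) }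

/-- The standard basis elements of the nilradical `n = ⊕_{j>0} g_j` of `p`. -/
def nSet (n l : ℕ) (h : l ∣ n) : Set (UQ n) :=
  { x : UQ n | ∃ (p q : Fin (n / l)) (a b : Fin l), a.val < b.val ∧
      (x = Ue (bidx h p a) (bidx h q b) ∨ x = Uf (bidx h p a) (bidx h q b)) }

/-- The kernel of the Harish-Chandra projection `ϑ : U(p) → U(g₀)`, realized inside
`U(Q(n))`: the `ℂ`-span of `U(p)·n`.  (By the PBW theorem, `U(g) = U(p) ⊕ I_χ` and
`U(p) = U(g₀) ⊕ U(p)n`, so for `y ∈ U(g)`, `ϑ(pr(y)) = t` iff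
`y - t ∈ I_χ + U(p)n`.) -/
def Lspan (n l : ℕ) (h : l ∣ n) : Submodule ℂ (UQ n) :=
  Submodule.span ℂ
    { x : UQ n | ∃ u ∈ Algebra.adjoin ℂ (pSet n l h), ∃ g ∈ nSet n l h, x = u * g }

/-- A descriptor of a generator of `U(p)`:  `(b, p, q, a, c)` is
`e_{l(p-1)+(a+1), l(q-1)+(c+1)}` if `b = false` and `f_{…}` if `b = true`
(required: `a ≤ c`). -/
def pgElem {n l : ℕ} (h : l ∣ n) :
    Bool × Fin (n / l) × Fin (n / l) × Fin l × Fin l → UQ n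
  | (b, p, q, a, c) => (if b then Uf else Ue) (bidx h p a) (bidx h q c)

/-- Kazhdan degree `2k+2` of a `p`-generator of block offset `k = c - a`. -/
def pgDeg {l m : ℕ} (d : Bool × Fin m × Fin m × Fin l × Fin l) : ℕ :=
  2 * (d.2.2.2.2.val - d.2.2.2.1.val) + 2

/-- Weight `2k` of a `p`-generator of block offset `k = c - a`. -/
def pgWt {l m : ℕ} (d : Bool × Fin m × Fin m × Fin l × Fin l) : ℕ :=
  2 * (d.2.2.2.2.val - d.2.2.2.1.val)

/-- Monomials in the generators of `U(p)` which are "lower" than bidegree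
(Kazhdan degree `D`, weight `W`): either of Kazhdan degree `< D`, or of Kazhdan
degree `≤ D` and weight `< W`. -/
def LowSet (n l : ℕ) (h : l ∣ n) (D W : ℕ) : Set (UQ n) :=
  { x : UQ n | ∃ L : List (Bool × Fin (n / l) × Fin (n / l) × Fin l × Fin l),
      (∀ d ∈ L, d.2.2.2.1.val ≤ d.2.2.2.2.val) ∧
      x = (L.map (pgElem h)).prod ∧
      ((L.map pgDeg).sum < D ∨ ((L.map pgDeg).sum ≤ D ∧ (L.map pgWt).sum < W)) }

/-- The span of the "lower" monomials. -/
def LowSpan (n l : ℕ) (h : l ∣ n) (D W : ℕ) : Submodule ℂ (UQ n) :=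
  Submodule.span ℂ (LowSet n l h D W)

/-! # The super tensor power `U(Q(m))^{⊗l}`

Modeled as the superalgebra with generators `x^i_{pq} = 1^{⊗(l-i)} ⊗ e_{pq} ⊗ 1^{⊗(i-1)}`
(even) and `ξ^i_{pq} = 1^{⊗(l-i)} ⊗ f_{pq} ⊗ 1^{⊗(i-1)}` (odd), subject to the `U(Q(m))`
relations in each tensor slot and to (super-)commutation between different slots. -/

/-- Generators of `U(Q(m))^{⊗l}`: `X i p q` is `x^i_{pq}` and `Xi i p q` is `ξ^i_{pq}`
(`i : Fin l` is the 0-based tensor slot, counted from the right). -/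
inductive TGen (m l : ℕ) : Type
  | X : Fin l → Fin m → Fin m → TGen m l
  | Xi : Fin l → Fin m → Fin m → TGen m l

/-- Kronecker delta on slots. -/
def kdl {l : ℕ} (i j : Fin l) : ℂ := if i = j then 1 else 0

/-- The defining relations of `U(Q(m))^{⊗l}`. -/
inductive TRel (m l : ℕ) : FreeAlgebra ℂ (TGen m l) → FreeAlgebra ℂ (TGen m l) → Prop
  | xx (i i' : Fin l) (p q r s : Fin m) : TRel m l
      (FreeAlgebra.ι ℂ (TGen.X i p q) * FreeAlgebra.ι ℂ (TGen.X i' r s) -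
        FreeAlgebra.ι ℂ (TGen.X i' r s) * FreeAlgebra.ι ℂ (TGen.X i p q))
      ((kdl i i' * kd q r) • FreeAlgebra.ι ℂ (TGen.X i p s) -
        (kdl i i' * kd s p) • FreeAlgebra.ι ℂ (TGen.X i' r q))
  | xxi (i i' : Fin l) (p q r s : Fin m) : TRel m l
      (FreeAlgebra.ι ℂ (TGen.X i p q) * FreeAlgebra.ι ℂ (TGen.Xi i' r s) -
        FreeAlgebra.ι ℂ (TGen.Xi i' r s) * FreeAlgebra.ι ℂ (TGen.X i p q))
      ((kdl i i' * kd q r) • FreeAlgebra.ι ℂ (TGen.Xi i p s) -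
        (kdl i i' * kd s p) • FreeAlgebra.ι ℂ (TGen.Xi i' r q))
  | xixi (i i' : Fin l) (p q r s : Fin m) : TRel m l
      (FreeAlgebra.ι ℂ (TGen.Xi i p q) * FreeAlgebra.ι ℂ (TGen.Xi i' r s) +
        FreeAlgebra.ι ℂ (TGen.Xi i' r s) * FreeAlgebra.ι ℂ (TGen.Xi i p q))
      ((kdl i i' * kd q r) • FreeAlgebra.ι ℂ (TGen.X i p s) +
        (kdl i i' * kd s p) • FreeAlgebra.ι ℂ (TGen.X i' r q))

/-- The superalgebra `U(Q(m))^{⊗l}`. -/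
abbrev TQ (m l : ℕ) := RingQuot (TRel m l)

/-- `x^i_{pq} := 1^{⊗(l-i)} ⊗ e_{pq} ⊗ 1^{⊗(i-1)} ∈ U(Q(m))^{⊗l}`. -/
def xT {m l : ℕ} (i : Fin l) (p q : Fin m) : TQ m l :=
  RingQuot.mkAlgHom ℂ (TRel m l) (FreeAlgebra.ι ℂ (TGen.X i p q))

/-- `ξ^i_{pq} := 1^{⊗(l-i)} ⊗ f_{pq} ⊗ 1^{⊗(i-1)} ∈ U(Q(m))^{⊗l}`. -/
def xiT {m l : ℕ} (i : Fin l) (p q : Fin m) : TQ m l :=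
  RingQuot.mkAlgHom ℂ (TRel m l) (FreeAlgebra.ι ℂ (TGen.Xi i p q))

/-! # The super-Yangian `Y(Q(n))` -/

/-- The index set `{±1, …, ±n}`:  `(false, a)` is the positive index `a` (even),
`(true, a)` is the negative index `-a` (odd). -/
abbrev QIdx (n : ℕ) := Bool × Fin n

/-- Negation `i ↦ -i` on indices. -/
def qneg {n : ℕ} (i : QIdx n) : QIdx n := (!i.1, i.2)

/-- The parity `p(i)`: `0` for positive `i`, `1` for negative `i`. -/
def qpar {n : ℕ} (i : QIdx n) : ℕ := if i.1 then 1 else 0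

/-- Kronecker delta on `{±1, …, ±n}`. -/
def kdq {n : ℕ} (i j : QIdx n) : ℂ := if i = j then 1 else 0

/-- Generators of `Y(Q(n))`: `T m i j` encodes `T^{(m+1)}_{i,j}`. -/
inductive YGen (n : ℕ) : Type
  | T : ℕ → QIdx n → QIdx n → YGen n

/-- `T^{(m)}_{i,j}` in the free algebra, with `T^{(0)}_{i,j} = δ_{ij}`. -/
def Tf {n : ℕ} : ℕ → QIdx n → QIdx n → FreeAlgebra ℂ (YGen n)
  | 0, i, j => algebraMap ℂ _ (kdq i j)
  | m + 1, i, j => FreeAlgebra.ι ℂ (YGen.T m i j)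

/-- The super-commutator `[T^{(a)}_{i,j}, T^{(b)}_{k,l}]` in the free algebra. -/
def ybr {n : ℕ} (a : ℕ) (i j : QIdx n) (b : ℕ) (k l : QIdx n) :
    FreeAlgebra ℂ (YGen n) :=
  Tf a i j * Tf b k l -
    ((-1 : ℂ) ^ ((qpar i + qpar j) * (qpar k + qpar l))) • (Tf b k l * Tf a i j)

/-- The defining relations of the super-Yangian `Y(Q(n))`: for `M, R ≥ 1`,
`(-1)^{p(i)p(k)+p(i)p(l)+p(k)p(l)} ([T^{(M+1)}_{ij}, T^{(R-1)}_{kl}] - [T^{(M-1)}_{ij}, T^{(R+1)}_{kl}])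
 = T^{(M)}_{kj}T^{(R-1)}_{il} + T^{(M-1)}_{kj}T^{(R)}_{il} - T^{(R-1)}_{kj}T^{(M)}_{il}
   - T^{(R)}_{kj}T^{(M-1)}_{il}
   + (-1)^{p(k)+p(l)} (-T^{(M)}_{-k,j}T^{(R-1)}_{-i,l} + T^{(M-1)}_{-k,j}T^{(R)}_{-i,l}
       + T^{(R-1)}_{k,-j}T^{(M)}_{i,-l} - T^{(R)}_{k,-j}T^{(M-1)}_{i,-l})`
(here `M = m+1`, `R = r+1`), together with `T^{(m)}_{-i,-j} = (-1)^m T^{(m)}_{i,j}`. -/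
inductive YRel (n : ℕ) : FreeAlgebra ℂ (YGen n) → FreeAlgebra ℂ (YGen n) → Prop
  | quad (m r : ℕ) (i j k l : QIdx n) : YRel n
      (((-1 : ℂ) ^ (qpar i * qpar k + qpar i * qpar l + qpar k * qpar l)) •
        (ybr (m + 2) i j r k l - ybr m i j (r + 2) k l))
      (Tf (m + 1) k j * Tf r i l + Tf m k j * Tf (r + 1) i l -
        Tf r k j * Tf (m + 1) i l - Tf (r + 1) k j * Tf m i l +
        ((-1 : ℂ) ^ (qpar k + qpar l)) •
          (-(Tf (m + 1) (qneg k) j * Tf r (qneg i) l) +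
            Tf m (qneg k) j * Tf (r + 1) (qneg i) l +
            Tf r k (qneg j) * Tf (m + 1) i (qneg l) -
            Tf (r + 1) k (qneg j) * Tf m i (qneg l)))
  | par (m : ℕ) (i j : QIdx n) : YRel n
      (Tf (m + 1) (qneg i) (qneg j)) (((-1 : ℂ) ^ (m + 1)) • Tf (m + 1) i j)

/-- The super-Yangian `Y(Q(n))`. -/
abbrev YQ (n : ℕ) := RingQuot (YRel n)

/-- The generator `T^{(m)}_{i,j}` of `Y(Q(n))` (with `T^{(0)}_{i,j} = δ_{ij}`). -/
def TY {n : ℕ} (m : ℕ) (i j : QIdx n) : YQ n :=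
  RingQuot.mkAlgHom ℂ (YRel n) (Tf m i j)

/-! # Values of the homomorphisms `U`, `ev`, `ēv` on the generators of `Y(Q(n))`,
and the explicit sums appearing in the main theorems. -/

/-- The value of the homomorphism `U : Y(Q(n)) → U(Q(n))` on the generator
`T^{(r)}_{i,j}`:  `U(T^{(r)}_{i,j}) = (-1)^r e^{(r)}_{j,i}`,
`U(T^{(r)}_{-i,j}) = (-1)^r f^{(r)}_{j,i}` for `i, j > 0`, and the values on the other
generators are forced by `T^{(r)}_{-i,-j} = (-1)^r T^{(r)}_{i,j}`. -/
def Uval {n : ℕ} (r : ℕ) (i j : QIdx n) : UQ n :=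
  (if j.1 then (-1 : ℂ) ^ r else 1) •
    ((-1 : ℂ) ^ r • (if xor i.1 j.1 then fU r j.2 i.2 else eU r j.2 i.2))

/-- The value of the evaluation homomorphism `ev : Y(Q(n)) → U(Q(n))` on `T^{(r)}_{i,j}`:
`ev(T^{(1)}_{i,j}) = -e_{j,i}`, `ev(T^{(1)}_{-i,j}) = -f_{j,i}` for `i, j > 0`,
`ev(T^{(0)}_{i,j}) = δ_{ij}` and `ev(T^{(r)}_{i,j}) = 0` for `r > 1` (with the values on
the remaining generators forced by `T^{(r)}_{-i,-j} = (-1)^r T^{(r)}_{i,j}`). -/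
def evval {n : ℕ} (r : ℕ) (i j : QIdx n) : UQ n :=
  (if j.1 then (-1 : ℂ) ^ r else 1) •
    (match r with
      | 0 => if xor i.1 j.1 then 0 else algebraMap ℂ (UQ n) (kd i.2 j.2)
      | 1 => -(if xor i.1 j.1 then Uf j.2 i.2 else Ue j.2 i.2)
      | _ + 2 => 0)

/-- The value of `ēv = α ∘ ev : Y(Q(n)) → U(Q(n))` on `T^{(r)}_{i,j}`, where `α` is the
principal anti-automorphism of `U(Q(n))`:  `ēv(T^{(1)}_{i,j}) = e_{j,i}`,
`ēv(T^{(1)}_{-i,j}) = f_{j,i}` for `i, j > 0`, `ēv(T^{(0)}_{i,j}) = δ_{ij}`,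
`ēv(T^{(r)}_{i,j}) = 0` for `r > 1`. -/
def bevval {n : ℕ} (r : ℕ) (i j : QIdx n) : UQ n :=
  (if j.1 then (-1 : ℂ) ^ r else 1) •
    (match r with
      | 0 => if xor i.1 j.1 then 0 else algebraMap ℂ (UQ n) (kd i.2 j.2)
      | 1 => (if xor i.1 j.1 then Uf j.2 i.2 else Ue j.2 i.2)
      | _ + 2 => 0)

/-- The sum `Σ_{p_1,…,p_{r-1}} Σ_{l ≥ i_1 ≥ i_2 ≥ … ≥ i_r ≥ 1}
Π_{a=1}^r (x^{i_a}_{p_{a-1},p_a} + (-1)^{r-a} ξ^{i_a}_{p_{a-1},p_a})`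
(with `p_0 = p`, `p_r = q`), an element of `U(Q(m))^{⊗l}`. -/
def chainProdDec (m l : ℕ) (r : ℕ) (p q : Fin m) : TQ m l :=
  ∑ c : Fin (r + 1) → Fin m, ∑ iv : Fin r → Fin l,
    (if c 0 = p ∧ c (Fin.last r) = q ∧ (∀ a b : Fin r, a ≤ b → iv b ≤ iv a)
      then (1 : ℂ) else 0) •
      (List.ofFn fun a : Fin r =>
        xT (iv a) (c a.castSucc) (c a.succ) +
          ((-1 : ℂ) ^ (r - 1 - a.val)) • xiT (iv a) (c a.castSucc) (c a.succ)).prod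

/-- The sum `Σ_{p_1,…,p_{r-1}} Σ_{1 ≤ i_1 < i_2 < … < i_r ≤ l}
Π_{a=1}^r (x^{i_a}_{p_{a-1},p_a} + (-1)^{r-a} ξ^{i_a}_{p_{a-1},p_a})`
(with `p_0 = p`, `p_r = q`), an element of `U(Q(m))^{⊗l}`. -/
def chainProdInc (m l : ℕ) (r : ℕ) (p q : Fin m) : TQ m l :=
  ∑ c : Fin (r + 1) → Fin m, ∑ iv : Fin r → Fin l,
    (if c 0 = p ∧ c (Fin.last r) = q ∧ (∀ a b : Fin r, a < b → iv a < iv b)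
      then (1 : ℂ) else 0) •
      (List.ofFn fun a : Fin r =>
        xT (iv a) (c a.castSucc) (c a.succ) +
          ((-1 : ℂ) ^ (r - 1 - a.val)) • xiT (iv a) (c a.castSucc) (c a.succ)).prod

/-- The elements `z^{(r)}_{±q,p}` of `U(Q(m))^{⊗l}`:  the even (`sgn = false`,
giving `z^{(r)}_{q,p}`) resp. odd (`sgn = true`, giving `z^{(r)}_{-q,p}`) component of
`chainProdDec`, computed using the parity involution `σT` of `U(Q(m))^{⊗l}`;
`z^{(0)}_{q,p} = δ_{qp}`, `z^{(0)}_{-q,p} = 0`. -/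
def zDec {m l : ℕ} (σT : TQ m l →ₐ[ℂ] TQ m l) :
    ℕ → Bool → Fin m → Fin m → TQ m l
  | 0, sgn, q, p => if sgn then 0 else algebraMap ℂ (TQ m l) (kd q p)
  | r + 1, sgn, q, p =>
      (2⁻¹ : ℂ) • (chainProdDec m l (r + 1) p q +
        (if sgn then (-1 : ℂ) else 1) • σT (chainProdDec m l (r + 1) p q))

/-- The elements `z̃^{(r)}_{±q,p}` of `U(Q(m))^{⊗l}` (as `zDec`, with increasing chains). -/
def zInc {m l : ℕ} (σT : TQ m l →ₐ[ℂ] TQ m l) :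
    ℕ → Bool → Fin m → Fin m → TQ m l
  | 0, sgn, q, p => if sgn then 0 else algebraMap ℂ (TQ m l) (kd q p)
  | r + 1, sgn, q, p =>
      (2⁻¹ : ℂ) • (chainProdInc m l (r + 1) p q +
        (if sgn then (-1 : ℂ) else 1) • σT (chainProdInc m l (r + 1) p q))

/-- The explicit formula for the antipode value `S(T^{(r)}_{i,j})` (`r ≥ 1`):
`S(T^{(r)}_{i,j}) = Σ_{m=1}^{r} (-1)^m Σ_{i_1,…,i_{m-1}} Σ_{r_1+⋯+r_m=r, r_a>0}
(-1)^{ν(i,i_1,…,i_{m-1},j)} T^{(r_1)}_{i,i_1} ⋯ T^{(r_m)}_{i_{m-1},j}` where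
`ν(i_0,…,i_m) = Σ_{0≤k<s≤m-1} (p(i_k)+p(i_{k+1}))(p(i_s)+p(i_{s+1}))`. -/
def STval {n : ℕ} (r : ℕ) (i j : QIdx n) : YQ n :=
  ∑ m : Fin r,
    ((-1 : ℂ) ^ (m.val + 1)) •
      ∑ ch : Fin (m.val + 2) → QIdx n, ∑ c : Fin (m.val + 1) → Fin (r + 1),
        (if ch 0 = i ∧ ch (Fin.last (m.val + 1)) = j ∧ (∀ a, 1 ≤ (c a).val) ∧
              (∑ a, (c a).val) = r
          then ((-1 : ℂ) ^ (∑ a : Fin (m.val + 1), ∑ b : Fin (m.val + 1),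
              if a < b then
                (qpar (ch a.castSucc) + qpar (ch a.succ)) *
                  (qpar (ch b.castSucc) + qpar (ch b.succ))
              else 0))
          else 0) •
        (List.ofFn fun a : Fin (m.val + 1) =>
          TY (c a).val (ch a.castSucc) (ch a.succ)).prod

section Aux13

lemma neg_one_smulG {B : Type*} [Ring B] [Algebra ℂ B] (y : B) : (-1 : ℂ) • y = -y := by
  rw [neg_smul, one_smul]

lemma neg_one_smulT {n l : ℕ} (y : TQ n l) : (-1 : ℂ) • y = -y := neg_one_smulG y

/-- Slot matrix with entries `± x^a`, `± ξ^a`. -/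
def Nmat {n l : ℕ} (a : Fin l) : Matrix (QIdx n) (QIdx n) (TQ n l) :=
  Matrix.of fun j i => (if j.1 then (-1 : ℂ) else 1) •
    (if xor i.1 j.1 then xiT a j.2 i.2 else xT a j.2 i.2)

/-- The linear series `1 + N_a u`. -/
def Pser {n l : ℕ} (a : Fin l) : PowerSeries (Matrix (QIdx n) (QIdx n) (TQ n l)) :=
  PowerSeries.mk fun r => match r with
    | 0 => 1
    | 1 => Nmat a
    | _ + 2 => 0

/-- The inverse geometric series. -/
def Qser {n l : ℕ} (a : Fin l) : PowerSeries (Matrix (QIdx n) (QIdx n) (TQ n l)) :=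
  PowerSeries.mk fun r => (-Nmat a) ^ r

lemma Pser_eq {n l : ℕ} (a : Fin l) :
    (Pser a : PowerSeries (Matrix (QIdx n) (QIdx n) (TQ n l))) =
      1 + PowerSeries.C (Nmat a) * PowerSeries.X := by
  ext1 r
  rcases r with _ | _ | r
  · simp [Pser]
  · simp [Pser, PowerSeries.coeff_succ_mul_X, PowerSeries.coeff_one]
  · simp [Pser, PowerSeries.coeff_succ_mul_X, PowerSeries.coeff_one, PowerSeries.coeff_C]

lemma Q_mul_P {n l : ℕ} (a : Fin l) :
    (Qser a : PowerSeries (Matrix (QIdx n) (QIdx n) (TQ n l))) * Pser a = 1 := by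
  rw [Pser_eq, mul_add, mul_one, ← mul_assoc]
  ext1 r
  rcases r with _ | r
  · simp [Qser]
  · rw [map_add, PowerSeries.coeff_succ_mul_X, PowerSeries.coeff_mul_C]
    simp [Qser, PowerSeries.coeff_one, pow_succ]

lemma P_mul_Q {n l : ℕ} (a : Fin l) :
    (Pser a : PowerSeries (Matrix (QIdx n) (QIdx n) (TQ n l))) * Qser a = 1 := by
  rw [Pser_eq, add_mul, one_mul, mul_assoc]
  ext1 r
  rcases r with _ | r
  · simp [Qser]
  · rw [map_add, PowerSeries.coeff_C_mul, PowerSeries.coeff_succ_X_mul]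
    simp [Qser, PowerSeries.coeff_one, pow_succ']

/-- Product of all the linear series. -/
def Wser (n l : ℕ) : PowerSeries (Matrix (QIdx n) (QIdx n) (TQ n l)) :=
  (List.ofFn fun a : Fin l => Pser a).prod

/-- Induced map on series of matrices. -/
def smap {n l l' : ℕ} (φ : TQ n l →ₐ[ℂ] TQ n l') :
    PowerSeries (Matrix (QIdx n) (QIdx n) (TQ n l)) →+*
      PowerSeries (Matrix (QIdx n) (QIdx n) (TQ n l')) :=
  PowerSeries.map (RingHom.mapMatrix (φ : TQ n l →+* TQ n l'))

lemma coeff_smap {n l l' : ℕ} (φ : TQ n l →ₐ[ℂ] TQ n l')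
    (A : PowerSeries (Matrix (QIdx n) (QIdx n) (TQ n l))) (r : ℕ) (i j : QIdx n) :
    PowerSeries.coeff r (smap φ A) i j = φ (PowerSeries.coeff r A i j) := by
  simp [smap]

lemma smap_P {n l l' : ℕ} (φ : TQ n l →ₐ[ℂ] TQ n l') (a : Fin l) (b : Fin l')
    (hx : ∀ i i' : Fin n, φ (xT a i i') = xT b i i')
    (hxi : ∀ i i' : Fin n, φ (xiT a i i') = xiT b i i') :
    smap φ (Pser a) = Pser b := by
  ext r i j
  rw [coeff_smap]
  rcases r with _ | _ | r
  · simp [Pser, Matrix.one_apply, apply_ite φ]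
  · simp [Pser, Nmat, apply_ite φ, hx, hxi]
  · simp [Pser]

lemma W_succ {n l : ℕ} (φ : TQ n l →ₐ[ℂ] TQ n (l + 1))
    (hx : ∀ (a : Fin l) (i i' : Fin n), φ (xT a i i') = xT a.succ i i')
    (hxi : ∀ (a : Fin l) (i i' : Fin n), φ (xiT a i i') = xiT a.succ i i') :
    Wser n (l + 1) = Pser 0 * smap φ (Wser n l) := by
  unfold Wser
  rw [List.ofFn_succ, List.prod_cons, map_list_prod, List.map_ofFn]
  congr 3
  funext a
  exact (smap_P φ a a.succ (hx a) (hxi a)).symm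

lemma W_succ' {n l : ℕ} (φ : TQ n l →ₐ[ℂ] TQ n (l + 1))
    (hx : ∀ (a : Fin l) (i i' : Fin n), φ (xT a i i') = xT a.castSucc i i')
    (hxi : ∀ (a : Fin l) (i i' : Fin n), φ (xiT a i i') = xiT a.castSucc i i') :
    Wser n (l + 1) = smap φ (Wser n l) * Pser (Fin.last l) := by
  unfold Wser
  rw [List.ofFn_succ', List.concat_eq_append, List.prod_append, List.prod_singleton,
    map_list_prod, List.map_ofFn]
  congr 3
  funext a
  exact (smap_P φ a a.castSucc (hx a) (hxi a)).symm

/-- `y` supercommutes with slot `0` as an element of parity `q`. -/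
def SC {n l : ℕ} (q : ℕ) (y : TQ n (l + 1)) : Prop :=
  ∀ i i' : Fin n, xT 0 i i' * y = y * xT 0 i i' ∧
    xiT 0 i i' * y = (-1 : ℂ) ^ q • (y * xiT 0 i i')

lemma SC.zero {n l : ℕ} (q : ℕ) : SC q (0 : TQ n (l + 1)) := fun i i' => by simp

lemma SC.one {n l : ℕ} (q : ℕ) (hq : Even q) : SC q (1 : TQ n (l + 1)) := fun i i' => by
  simp [hq.neg_one_pow]

lemma SC.add {n l : ℕ} {q : ℕ} {y z : TQ n (l + 1)} (hy : SC q y) (hz : SC q z) :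
    SC q (y + z) := fun i i' => by
  rw [mul_add, mul_add, add_mul, add_mul, (hy i i').1, (hz i i').1, (hy i i').2, (hz i i').2,
    smul_add]
  exact ⟨rfl, rfl⟩

lemma SC.smul {n l : ℕ} {q : ℕ} {y : TQ n (l + 1)} (c : ℂ) (hy : SC q y) :
    SC q (c • y) := fun i i' => by
  rw [mul_smul_comm, mul_smul_comm, smul_mul_assoc, smul_mul_assoc, (hy i i').1, (hy i i').2,
    smul_comm]
  exact ⟨rfl, rfl⟩

lemma SC.mul {n l : ℕ} {q q' : ℕ} {y z : TQ n (l + 1)} (hy : SC q y) (hz : SC q' z) :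
    SC (q + q') (y * z) := fun i i' => by
  constructor
  · rw [← mul_assoc, (hy i i').1, mul_assoc, (hz i i').1, mul_assoc]
  · rw [← mul_assoc, (hy i i').2, smul_mul_assoc, mul_assoc, (hz i i').2, mul_smul_comm,
      smul_smul, pow_add, mul_assoc]

lemma SC.congr {n l : ℕ} {q q' : ℕ} {y : TQ n (l + 1)} (hy : SC q y)
    (h : (-1 : ℂ) ^ q = (-1 : ℂ) ^ q') : SC q' y := fun i i' => by
  rw [← h]; exact hy i i'

lemma SC.sum {n l : ℕ} {q : ℕ} {ι : Type*} (s : Finset ι) (f : ι → TQ n (l + 1))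
    (h : ∀ x ∈ s, SC q (f x)) : SC q (∑ x ∈ s, f x) :=
  Finset.sum_induction f (SC q) (fun _ _ => SC.add) (SC.zero q) h

lemma rel_xx {n l : ℕ} (a b : Fin l) (h : a ≠ b) (p q r s : Fin n) :
    (xT a p q : TQ n l) * xT b r s = xT b r s * xT a p q := by
  have := RingQuot.mkAlgHom_rel ℂ (TRel.xx (m := n) a b p q r s)
  simp only [kdl, h, if_false, zero_mul, zero_smul, sub_zero, map_sub, map_mul, map_zero] at this
  exact sub_eq_zero.mp this

lemma rel_xxi {n l : ℕ} (a b : Fin l) (h : a ≠ b) (p q r s : Fin n) :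
    (xT a p q : TQ n l) * xiT b r s = xiT b r s * xT a p q := by
  have := RingQuot.mkAlgHom_rel ℂ (TRel.xxi (m := n) a b p q r s)
  simp only [kdl, h, if_false, zero_mul, zero_smul, sub_zero, map_sub, map_mul, map_zero] at this
  exact sub_eq_zero.mp this

lemma rel_xixi {n l : ℕ} (a b : Fin l) (h : a ≠ b) (p q r s : Fin n) :
    (xiT a p q : TQ n l) * xiT b r s = -(xiT b r s * xiT a p q) := by
  have := RingQuot.mkAlgHom_rel ℂ (TRel.xixi (m := n) a b p q r s)
  simp only [kdl, h, if_false, zero_mul, zero_smul, add_zero, map_add, map_mul, map_zero] at this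
  exact eq_neg_of_add_eq_zero_left this

lemma SC_x {n l : ℕ} (a : Fin l) (p q : Fin n) : SC 0 (xT a.succ p q : TQ n (l + 1)) :=
  fun i i' => by
    constructor
    · exact rel_xx _ _ (Fin.succ_ne_zero a).symm _ _ _ _
    · rw [pow_zero, one_smul]; exact (rel_xxi _ _ (Fin.succ_ne_zero a) _ _ _ _).symm

lemma SC_xi {n l : ℕ} (a : Fin l) (p q : Fin n) : SC 1 (xiT a.succ p q : TQ n (l + 1)) :=
  fun i i' => by
    constructor
    · exact rel_xxi _ _ (Fin.succ_ne_zero a).symm _ _ _ _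
    · rw [pow_one, neg_one_smulT]; exact rel_xixi _ _ (Fin.succ_ne_zero a).symm _ _ _ _

/-- All coefficients of a matrix series are homogeneous of the right parity. -/
def SCs {n l : ℕ} (A : PowerSeries (Matrix (QIdx n) (QIdx n) (TQ n (l + 1)))) : Prop :=
  ∀ (r : ℕ) (i j : QIdx n), SC (qpar i + qpar j) (PowerSeries.coeff r A i j)

lemma SCs_one {n l : ℕ} :
    SCs (1 : PowerSeries (Matrix (QIdx n) (QIdx n) (TQ n (l + 1)))) := by
  intro r i j
  rw [PowerSeries.coeff_one]
  split_ifs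
  · rw [Matrix.one_apply]
    split_ifs with h
    · subst h; exact SC.one _ ⟨_, rfl⟩
    · exact SC.zero _
  · exact SC.zero _

lemma SCs_mul {n l : ℕ} {A B : PowerSeries (Matrix (QIdx n) (QIdx n) (TQ n (l + 1)))}
    (hA : SCs A) (hB : SCs B) : SCs (A * B) := by
  intro r i j
  rw [PowerSeries.coeff_mul, Matrix.sum_apply]
  refine SC.sum _ _ fun x _ => ?_
  rw [Matrix.mul_apply]
  refine SC.sum _ _ fun k _ => ?_
  refine ((hA x.1 i k).mul (hB x.2 k j)).congr ?_
  have : qpar i + qpar k + (qpar k + qpar j) = qpar i + qpar j + 2 * qpar k := by ring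
  rw [this, pow_add, pow_mul]; simp

lemma SCs_P {n l : ℕ} (a : Fin l) :
    SCs (Pser a.succ : PowerSeries (Matrix (QIdx n) (QIdx n) (TQ n (l + 1)))) := by
  intro r i j
  rcases r with _ | _ | r
  · simpa [Pser] using SCs_one (n := n) (l := l) 0 i j
  · simp only [Pser, PowerSeries.coeff_mk, Nmat, Matrix.of_apply, zero_add]
    refine SC.smul _ ?_
    obtain ⟨bi, i⟩ := i
    obtain ⟨bj, j⟩ := j
    cases bi <;> cases bj <;> simp only [qpar, Bool.xor_false, Bool.xor_true, Bool.not_true,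
      Bool.not_false, if_true, if_false, Bool.false_eq_true]
    · exact SC_x a _ _
    · exact SC_xi a _ _
    · exact SC_xi a _ _
    · exact (SC_x a _ _).congr (by norm_num)
  · simpa [Pser] using SC.zero _

lemma SCs_W {n l : ℕ} (φ : TQ n l →ₐ[ℂ] TQ n (l + 1))
    (hx : ∀ (a : Fin l) (i i' : Fin n), φ (xT a i i') = xT a.succ i i')
    (hxi : ∀ (a : Fin l) (i i' : Fin n), φ (xiT a i i') = xiT a.succ i i') :
    SCs (smap φ (Wser n l)) := by
  unfold Wser
  rw [map_list_prod, List.map_ofFn]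
  refine List.prod_induction SCs (fun _ _ => SCs_mul) SCs_one ?_
  intro x hx'
  rw [List.mem_ofFn] at hx'
  obtain ⟨a, rfl⟩ := hx'
  simp only [Function.comp]
  rw [smap_P φ a a.succ (hx a) (hxi a)]
  exact SCs_P a

/-- The coefficients of `Pser` are the (signed) values of `ev`. -/
lemma emb_ev {n l : ℕ} (a : Fin l) (φ : UQ n →ₐ[ℂ] TQ n l)
    (hx : ∀ i i' : Fin n, φ (Ue i i') = xT a i i')
    (hxi : ∀ i i' : Fin n, φ (Uf i i') = xiT a i i') (r : ℕ) (i j : QIdx n) :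
    φ (evval r i j) = (-1 : ℂ) ^ r • PowerSeries.coeff r (Pser a) j i := by
  obtain ⟨bi, i⟩ := i
  obtain ⟨bj, j⟩ := j
  rcases r with _ | _ | r
  · cases bi <;> cases bj <;>
      simp [evval, Pser, Matrix.one_apply, kd, apply_ite φ, eq_comm]
  · cases bi <;> cases bj <;> simp [evval, Pser, Nmat, hx, hxi, neg_one_smulT]
  · simp [evval, Pser]

lemma emb_U {n l : ℕ} (a : Fin l) (φ : UQ n →ₐ[ℂ] TQ n l)
    (hx : ∀ i i' : Fin n, φ (Ue i i') = xT a i i')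
    (hxi : ∀ i i' : Fin n, φ (Uf i i') = xiT a i i') (r : ℕ) (i j : QIdx n) :
    φ (Uval r i j) = PowerSeries.coeff r (Qser a) j i := by
  simp only [Qser, PowerSeries.coeff_mk]
  induction r generalizing j with
  | zero =>
    obtain ⟨bi, i⟩ := i
    obtain ⟨bj, j⟩ := j
    cases bi <;> cases bj <;>
      simp [Uval, eU, fU, efU, Matrix.one_apply, kd, apply_ite φ]
  | succ r ih =>
    have he : ∀ j i : Fin n, φ (eU (r + 1) j i) = (∑ k, xT a j k * φ (eU r k i)) +
        (-1 : ℂ) ^ r • ∑ k, xiT a j k * φ (fU r k i) := by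
      intro j i
      simp only [eU, fU, efU, map_add, map_smul, map_sum, map_mul, hx, hxi]
    have hf : ∀ j i : Fin n, φ (fU (r + 1) j i) = (∑ k, xT a j k * φ (fU r k i)) +
        (-1 : ℂ) ^ r • ∑ k, xiT a j k * φ (eU r k i) := by
      intro j i
      simp only [eU, fU, efU, map_add, map_smul, map_sum, map_mul, hx, hxi]
    rw [pow_succ', Matrix.mul_apply]
    simp only [← ih, Fintype.sum_prod_type, Fintype.sum_bool]
    obtain ⟨bi, i⟩ := i
    obtain ⟨bj, j⟩ := j
    have h1 : (-1 : ℂ) ^ r * (-1 : ℂ) ^ r = 1 := by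
      rw [← mul_pow]; simp
    have h2 : ∀ y : TQ n l, (-1 : ℂ) ^ r • (-1 : ℂ) ^ r • y = y := by
      intro y; rw [smul_smul, h1, one_smul]
    have h3 : (-1 : ℂ) ^ (r + 1) = -1 * (-1 : ℂ) ^ r := pow_succ' _ _
    have h4 : ∀ y : TQ n l, (-1 : ℂ) ^ r • (-1 : ℂ) • y = (-1 : ℂ) • (-1 : ℂ) ^ r • y := by
      intro y; rw [smul_comm]
    have h5 : ∀ y : TQ n l, (-1 : ℂ) • (-1 : ℂ) • y = y := by
      intro y; rw [smul_smul]; simp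
    have h6 : ∀ y : TQ n l, (-1 * (-1 : ℂ) ^ r) • y = (-1 : ℂ) • (-1 : ℂ) ^ r • y := by
      intro y; rw [mul_smul]
    have h7 : ∀ (c : ℂ) (y : UQ n), φ (c • y) = c • φ y := fun c y => map_smul φ c y
    have h8 : ∀ (c : ℂ) (y z : TQ n l), c • (y + z) = c • y + c • z := smul_add
    have h9 : ∀ (c : ℂ) (y z : TQ n l), (c • y) * z = c • (y * z) := smul_mul_assoc
    have h10 : ∀ (c : ℂ) (y z : TQ n l), y * (c • z) = c • (y * z) :=
      fun c y z => mul_smul_comm c y z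
    have h11 : ∀ (c : ℂ) (y : Fin n → TQ n l), ∑ k, c • y k = c • ∑ k, y k :=
      fun c y => Finset.smul_sum.symm
    have h12 : ∀ k : QIdx n, (-Nmat a : Matrix (QIdx n) (QIdx n) (TQ n l)) (bj, j) k =
        (-1 : ℂ) • (Nmat a (bj, j) k) := fun k => (neg_one_smulT _).symm
    simp only [h12]
    simp only [Uval, Nmat, Matrix.of_apply, h7]
    cases bi <;> cases bj <;>
      simp only [Bool.xor_false, Bool.xor_true, Bool.not_true, Bool.not_false, if_true, if_false,
        Bool.false_eq_true, he, hf, h3, one_smul, h2, h4, h5, h6, h8, h9, h10, h11] <;>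
      first | rfl | exact add_comm _ _

lemma TY_zero {n : ℕ} (i j : QIdx n) : (TY 0 i j : YQ n) = algebraMap ℂ _ (kdq i j) := by
  simp [TY, Tf]

/-- A homomorphism out of `Y(Q(n))` lands in `S` if the generators do. -/
lemma YQ_mem {n : ℕ} {B : Type*} [Ring B] [Algebra ℂ B] (φ : YQ n →ₐ[ℂ] B)
    (S : Subalgebra ℂ B) (h : ∀ (s : ℕ) (i j : QIdx n), φ (TY s i j) ∈ S) (y : YQ n) :
    φ y ∈ S := by
  obtain ⟨x, rfl⟩ := RingQuot.mkAlgHom_surjective ℂ (YRel n) y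
  induction x using FreeAlgebra.induction with
  | grade0 r => simp only [AlgHom.commutes]; exact S.algebraMap_mem r
  | grade1 x =>
    obtain ⟨m, i, j⟩ := x
    exact h (m + 1) i j
  | mul a b ha hb => rw [map_mul, map_mul]; exact S.mul_mem ha hb
  | add a b ha hb => rw [map_add, map_add]; exact S.add_mem ha hb

/-- Inverting a matrix series stays within the subalgebra of its entries. -/
lemma inv_mem {ι B : Type*} [Fintype ι] [DecidableEq ι] [Ring B] [Algebra ℂ B]
    (S : Subalgebra ℂ B) (A W : PowerSeries (Matrix ι ι B)) (h : A * W = 1)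
    (h0 : PowerSeries.coeff 0 A = 1) (hA : ∀ r i j, PowerSeries.coeff r A i j ∈ S)
    (r : ℕ) : ∀ i j, PowerSeries.coeff r W i j ∈ S := by
  induction r using Nat.strong_induction_on with
  | _ r ih =>
    intro i j
    have h2 : PowerSeries.coeff r (A * W) i j ∈ S := by
      rw [h, PowerSeries.coeff_one]
      split_ifs
      · rw [Matrix.one_apply]
        split_ifs
        · exact S.one_mem
        · exact S.zero_mem
      · exact S.zero_mem
    rw [PowerSeries.coeff_mul, Finset.Nat.sum_antidiagonal_eq_sum_range_succ
      (fun a b => PowerSeries.coeff a A * PowerSeries.coeff b W), Finset.sum_range_succ', h0,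
      one_mul, Nat.sub_zero, Matrix.add_apply, Matrix.sum_apply] at h2
    refine (S.toSubring.add_mem_cancel_left ?_).mp h2
    refine S.toSubring.sum_mem fun x hx => ?_
    rw [Matrix.mul_apply]
    refine S.toSubring.sum_mem fun k _ => ?_
    have := Finset.mem_range.mp hx
    exact S.mul_mem (hA _ _ _) (ih _ (by omega) _ _)


/-- Coefficient of a product of matrix series, in the shape of the comultiplication. -/
lemma mul_comm_coeff_aux {ι B : Type*} [Fintype ι] [Ring B]
    [DecidableEq ι] (A W : PowerSeries (Matrix ι ι B)) (s : ℕ) (i' i : ι) :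
    PowerSeries.coeff s (A * W) i' i = ∑ t : Fin (s + 1), ∑ k : ι,
      PowerSeries.coeff (s - t.val) A i' k * PowerSeries.coeff t.val W k i := by
  rw [PowerSeries.coeff_mul, ← Finset.Nat.sum_antidiagonal_swap,
    Finset.Nat.sum_antidiagonal_eq_sum_range_succ_mk, Finset.sum_range, Matrix.sum_apply]
  simp [Matrix.mul_apply]

/-- Moving a slot-`0` coefficient past a supercommuting element. -/
lemma SC_P {n l : ℕ} {q : ℕ} {y : TQ n (l + 1)} (hy : SC q y) (r : ℕ) (i j : QIdx n) :
    y * PowerSeries.coeff r (Pser 0) i j =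
      (-1 : ℂ) ^ (q * (qpar i + qpar j)) • (PowerSeries.coeff r (Pser 0) i j * y) := by
  have hq : (-1 : ℂ) ^ q * (-1 : ℂ) ^ q = 1 := by rw [← mul_pow]; simp
  have hq2 : (-1 : ℂ) ^ (q * 2) = 1 := by rw [mul_comm, pow_mul]; simp
  rcases r with _ | _ | r
  · simp only [Pser, PowerSeries.coeff_mk, Matrix.one_apply]
    split_ifs with h
    · subst h
      rw [← two_mul, ← mul_assoc, pow_mul, hq2]; simp
    · simp
  · simp only [Pser, PowerSeries.coeff_mk, Nmat, Matrix.of_apply, zero_add, mul_smul_comm,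
      smul_mul_assoc]
    rw [smul_comm]
    congr 1
    obtain ⟨bi, i⟩ := i
    obtain ⟨bj, j⟩ := j
    cases bi <;> cases bj <;> simp [qpar, (hy _ _).1, (hy _ _).2, smul_smul, hq, hq2]
  · simp [Pser]

end Aux13

/-- For every `k ≥ 1` and `n ≥ 1`, the image of `Y(Q(n))` in
`U(Q(n))^{⊗k}` under `U^{⊗k}∘Δ_k^{op}` coincides with its image under `ev^{⊗k}∘Δ_k`.
The two families of algebra homomorphisms `Gop j = U^{⊗j}∘Δ_j^{op}` and
`Gev j = ev^{⊗j}∘Δ_j` are characterized on generators as in Statements 10 and 15. -/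
theorem statement13 (n k : ℕ) (hn : 0 < n) (hk : 1 ≤ k)
    (emb : ∀ j : ℕ, Fin j → (UQ n →ₐ[ℂ] TQ n j))
    (hembx : ∀ (j : ℕ) (a : Fin j) (i i' : Fin n), emb j a (Ue i i') = xT a i i')
    (hembxi : ∀ (j : ℕ) (a : Fin j) (i i' : Fin n), emb j a (Uf i i') = xiT a i i')
    (ish : ∀ j : ℕ, TQ n j →ₐ[ℂ] TQ n (j + 1))
    (hishx : ∀ (j : ℕ) (a : Fin j) (i i' : Fin n), ish j (xT a i i') = xT a.castSucc i i')
    (hishxi : ∀ (j : ℕ) (a : Fin j) (i i' : Fin n), ish j (xiT a i i') = xiT a.castSucc i i')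
    (ishUp : ∀ j : ℕ, TQ n j →ₐ[ℂ] TQ n (j + 1))
    (hishUpx : ∀ (j : ℕ) (a : Fin j) (i i' : Fin n), ishUp j (xT a i i') = xT a.succ i i')
    (hishUpxi : ∀ (j : ℕ) (a : Fin j) (i i' : Fin n), ishUp j (xiT a i i') = xiT a.succ i i')
    (Gop : ∀ j : ℕ, YQ n →ₐ[ℂ] TQ n j)
    (hGop1 : ∀ (s : ℕ) (i j : QIdx n), Gop 1 (TY s i j) = emb 1 0 (Uval s i j))
    (hGopStep : ∀ (j : ℕ), 1 ≤ j → ∀ (s : ℕ) (i i' : QIdx n),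
      Gop (j + 1) (TY s i i') =
        ∑ t : Fin (s + 1), ∑ kk : QIdx n,
          emb (j + 1) (Fin.last j) (Uval (s - t.val) kk i') *
            ish j (Gop j (TY t.val i kk)))
    (Gev : ∀ j : ℕ, YQ n →ₐ[ℂ] TQ n j)
    (hGev1 : ∀ (s : ℕ) (i j : QIdx n), Gev 1 (TY s i j) = emb 1 0 (evval s i j))
    (hGevStep : ∀ (j : ℕ), 1 ≤ j → ∀ (s : ℕ) (i i' : QIdx n),
      Gev (j + 1) (TY s i i') =
        ∑ t : Fin (s + 1), ∑ kk : QIdx n,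
          ((-1 : ℂ) ^ ((qpar i + qpar kk) * (qpar i' + qpar kk))) •
            (ishUp j (Gev j (TY t.val i kk)) * emb (j + 1) 0 (evval (s - t.val) kk i'))) :
    Set.range ⇑(Gop k) = Set.range ⇑(Gev k) := by
  classical
  -- matrix series of the two homomorphisms
  let O : ∀ j : ℕ, PowerSeries (Matrix (QIdx n) (QIdx n) (TQ n j)) := fun j =>
    PowerSeries.mk fun r => Matrix.of fun i' i => Gop j (TY r i i')
  have hO : ∀ j r i i', PowerSeries.coeff r (O j) i' i = Gop j (TY r i i') := by
    intro j r i i'; simp [O]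
  have hOstep : ∀ j, 1 ≤ j → O (j + 1) = Qser (Fin.last j) * smap (ish j) (O j) := by
    intro j hj
    ext s i' i
    rw [hO, hGopStep j hj, mul_comm_coeff_aux]
    refine Finset.sum_congr rfl fun t _ => ?_
    refine Finset.sum_congr rfl fun kk _ => ?_
    rw [coeff_smap, hO, emb_U _ _ (hembx _ _) (hembxi _ _)]
  have hO1 : O 1 = Qser 0 := by
    ext s i' i
    rw [hO, hGop1, emb_U _ _ (hembx _ _) (hembxi _ _)]
  have hW1 : Wser n 1 = Pser 0 := by simp [Wser]
  have hOW : ∀ j, 1 ≤ j → O j * Wser n j = 1 ∧ Wser n j * O j = 1 := by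
    intro j hj
    induction j, hj using Nat.le_induction with
    | base => rw [hO1, hW1]; exact ⟨Q_mul_P _, P_mul_Q _⟩
    | succ j hj ih =>
      rw [hOstep j hj, W_succ' (ish j) (hishx j) (hishxi j)]
      constructor
      · rw [mul_assoc, ← mul_assoc (smap (ish j) (O j)), ← map_mul, ih.1, map_one, one_mul,
          Q_mul_P]
      · rw [mul_assoc, ← mul_assoc (Pser (Fin.last j)), P_mul_Q, one_mul, ← map_mul, ih.2,
          map_one]
  have hV : ∀ j, 1 ≤ j → ∀ r i i',
      Gev j (TY r i i') = (-1 : ℂ) ^ r • PowerSeries.coeff r (Wser n j) i' i := by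
    intro j hj
    induction j, hj using Nat.le_induction with
    | base =>
      intro r i i'
      rw [hGev1, hW1, emb_ev _ _ (hembx _ _) (hembxi _ _)]
    | succ j hj ih =>
      intro r i i'
      rw [hGevStep j hj, W_succ (ishUp j) (hishUpx j) (hishUpxi j), mul_comm_coeff_aux,
        Finset.smul_sum]
      refine Finset.sum_congr rfl fun t _ => ?_
      rw [Finset.smul_sum]
      refine Finset.sum_congr rfl fun kk _ => ?_
      have hsc := SCs_W (ishUp j) (hishUpx j) (hishUpxi j) t.val kk i
      rw [ih, map_smul, emb_ev _ _ (hembx _ _) (hembxi _ _), ← coeff_smap (ishUp j),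
        smul_mul_smul_comm, SC_P hsc (r - t.val) i' kk, smul_smul, smul_smul, ← pow_add,
        Nat.add_sub_cancel' (Nat.lt_succ_iff.mp t.isLt), mul_comm ((-1 : ℂ) ^ _), mul_assoc,
        add_comm (qpar kk) (qpar i), ← pow_add, ← two_mul, pow_mul]
      simp
  have hW0 : PowerSeries.coeff 0 (Wser n k) = 1 := by
    ext i' i
    have h := hV k hk 0 i i'
    rw [pow_zero, one_smul, TY_zero, AlgHom.commutes] at h
    rw [← h, Matrix.one_apply]
    by_cases h' : i' = i
    · simp [kdq, h']
    · simp [kdq, h', Ne.symm h']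
  have hO0 : PowerSeries.coeff 0 (O k) = 1 := by
    ext i' i
    rw [hO, TY_zero, AlgHom.commutes, Matrix.one_apply]
    by_cases h' : i' = i
    · simp [kdq, h']
    · simp [kdq, h', Ne.symm h']
  apply Set.Subset.antisymm
  · rintro _ ⟨y, rfl⟩
    refine YQ_mem (Gop k) (Gev k).range (fun s i j => ?_) y
    rw [← hO]
    refine inv_mem _ (Wser n k) (O k) (hOW k hk).2 hW0 (fun r i i' => ?_) s j i
    refine ⟨(-1 : ℂ) ^ r • TY r i' i, ?_⟩
    change Gev k _ = _
    rw [map_smul, hV k hk, smul_smul, ← mul_pow]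
    simp
  · rintro _ ⟨y, rfl⟩
    refine YQ_mem (Gev k) (Gop k).range (fun s i j => ?_) y
    rw [hV k hk]
    refine Subalgebra.smul_mem _ ?_ _
    refine inv_mem _ (O k) (Wser n k) (hOW k hk).1 hO0 (fun r i i' => ?_) s j i
    exact ⟨TY r i' i, (hO k r i' i).symm⟩
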